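/- Fix t > 0, ξ > 0, y₀ > 0, p < 1 and k > 0, and set β_p := 1/(3-2p). Let C(k,τ) be the call price in the absorbed CEV-variance model, and suppose σ : (0, τ₀) → (0,∞) satisfies BS(k, σ(τ)², τ) = C(k,τ) for all τ ∈ (0,τ₀) (the implied volatility). Then lim_{τ→0⁺} σ(τ)² / [ (1 - β_p)·( k²ξ²t(1-p)/(2τ) )^{β_p} ] = 1; that is, σ(τ)² ∼ (1-β_p)·(k²ξ²t(1-p)/(2τ))^{β_p} as τ → 0⁺. -/

import Mathlib

/-- The standard normal cumulative distribution function. -/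
noncomputable def Phi (x : ℝ) : ℝ :=
  ∫ s in Set.Iic x, Real.exp (-(s ^ 2) / 2) / Real.sqrt (2 * Real.pi)

/-- The Black–Scholes call price. -/
noncomputable def BS (k w T : ℝ) : ℝ :=
  Phi (-k / Real.sqrt (w * T) + Real.sqrt (w * T) / 2)
    - Real.exp k * Phi (-k / Real.sqrt (w * T) - Real.sqrt (w * T) / 2)

/-- The modified Bessel function of the first kind of order `ν`. -/
noncomputable def besselI (ν x : ℝ) : ℝ :=
  ∑' m : ℕ, (x / 2) ^ (2 * (m : ℝ) + ν) / ((m.factorial : ℝ) * Real.Gamma ((m : ℝ) + ν + 1))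

noncomputable def gphi (s : ℝ) : ℝ := Real.exp (-(s ^ 2) / 2) / Real.sqrt (2 * Real.pi)

lemma gphi_pos (s : ℝ) : 0 < gphi s := by unfold gphi; positivity

lemma gphi_integrable : MeasureTheory.Integrable gphi := by
  have h := (integrable_exp_neg_mul_sq (b := 1/2) (by norm_num)).div_const (Real.sqrt (2 * Real.pi))
  refine h.congr (Filter.Eventually.of_forall fun x => ?_)
  simp only [gphi]; congr 2; ring

lemma gphi_integral : ∫ s, gphi s = 1 := by
  have h : ∀ x, gphi x = Real.exp (-(1/2) * x ^ 2) / Real.sqrt (2 * Real.pi) := by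
    intro x; simp only [gphi]; congr 2; ring
  simp_rw [h]
  rw [MeasureTheory.integral_div, integral_gaussian]
  have : Real.pi / (1/2) = 2 * Real.pi := by ring
  rw [this, div_self]; positivity

lemma Phi_eq (x : ℝ) : Phi x = ∫ s in Set.Iic x, gphi s := rfl

lemma Phi_nonneg (x : ℝ) : 0 ≤ Phi x := by
  rw [Phi_eq]
  exact MeasureTheory.integral_nonneg fun s => (gphi_pos s).le

lemma Phi_le_one (x : ℝ) : Phi x ≤ 1 := by
  rw [Phi_eq, ← gphi_integral]
  exact MeasureTheory.setIntegral_le_integral gphi_integrable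
    (Filter.Eventually.of_forall fun s => (gphi_pos s).le)

lemma shift_Iic (f : ℝ → ℝ) (A s : ℝ) :
    ∫ z in Set.Iic (A - s), f z = ∫ z in Set.Iic A, f (z - s) := by
  have h := (MeasureTheory.measurePreserving_sub_right MeasureTheory.volume s).setIntegral_preimage_emb
    (MeasurableEquiv.subRight s).measurableEmbedding f (Set.Iic (A - s))
  rw [← h]
  congr 2
  ext z; simp

lemma Phi_neg_le (d : ℝ) (hd : 0 ≤ d) : Phi (-d) ≤ Real.exp (-(d ^ 2) / 2) := by
  have h0 : -d = 0 - d := by ring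
  rw [Phi_eq, h0, shift_Iic]
  calc ∫ z in Set.Iic (0:ℝ), gphi (z - d)
      ≤ ∫ z in Set.Iic (0:ℝ), Real.exp (-(d ^ 2) / 2) * gphi z := by
        apply MeasureTheory.setIntegral_mono_on
        · exact (gphi_integrable.comp_sub_right d).integrableOn
        · exact (gphi_integrable.const_mul _).integrableOn
        · exact measurableSet_Iic
        · intro z hz
          simp only [gphi]
          rw [← mul_div_assoc, ← Real.exp_add]
          have hz' : z ≤ 0 := hz
          gcongr
          nlinarith
    _ = Real.exp (-(d ^ 2) / 2) * Phi 0 := by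
        rw [MeasureTheory.integral_const_mul, Phi_eq]
    _ ≤ _ := by
        have := Phi_le_one 0
        have := Real.exp_pos (-(d ^ 2) / 2)
        nlinarith

lemma BS_upper (k w T : ℝ) (hk : 0 < k) (hw : 0 < w) (hT : 0 < T) :
    BS k w T ≤ Real.exp (k / 2) * Real.exp (-(k ^ 2 / (2 * (w * T)))) := by
  have hv : 0 < w * T := mul_pos hw hT
  set v := w * T with hvdef
  set s := Real.sqrt v with hs
  have hspos : 0 < s := Real.sqrt_pos.2 hv
  have hs2 : s ^ 2 = v := Real.sq_sqrt hv.le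
  have h1 : BS k w T ≤ Phi (-k / s + s / 2) := by
    unfold BS
    rw [← hvdef, ← hs]
    have := Phi_nonneg (-k / s - s / 2)
    have := Real.exp_pos k
    nlinarith [mul_nonneg this.le ‹0 ≤ Phi (-k / s - s / 2)›]
  refine h1.trans ?_
  rw [← Real.exp_add, ← hs2]
  rcases le_total (s / 2) (k / s) with h | h
  · have e : -k / s + s / 2 = -(k / s - s / 2) := by ring
    rw [e]
    refine (Phi_neg_le _ (by linarith)).trans ?_
    apply Real.exp_le_exp.2
    have : (k / s - s / 2) ^ 2 = k ^ 2 / s ^ 2 - k + s ^ 2 / 4 := by field_simp; ring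
    rw [this]
    have e2 : k ^ 2 / (2 * s ^ 2) = (k ^ 2 / s ^ 2) / 2 := by field_simp
    rw [e2]
    nlinarith [sq_nonneg s]
  · refine (Phi_le_one _).trans ?_
    apply Real.one_le_exp
    have h2 : k ^ 2 / (2 * s ^ 2) ≤ k / 2 := by
      rw [div_le_iff₀ hspos] at h
      rw [div_le_div_iff₀ (by positivity) (by norm_num)]
      nlinarith
    linarith

lemma BS_lower (k w T : ℝ) (hk : 0 < k) (hw : 0 < w) (hT : 0 < T) :
    gphi (k / Real.sqrt (w * T) + 2) * (1 - Real.exp (-Real.sqrt (w * T))) ≤ BS k w T := by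
  have hv : 0 < w * T := mul_pos hw hT
  set s := Real.sqrt (w * T) with hs
  have hspos : 0 < s := Real.sqrt_pos.2 hv
  set A := -k / s + s / 2 with hA
  have e1 : -k / s - s / 2 = A - s := by rw [hA]; ring
  have e2 : BS k w T = ∫ z in Set.Iic A, (gphi z - Real.exp k * gphi (z - s)) := by
    unfold BS
    rw [← hs, e1, ← hA, Phi_eq, Phi_eq, shift_Iic, ← MeasureTheory.integral_const_mul,
      MeasureTheory.integral_sub]
    · exact gphi_integrable.integrableOn
    · exact ((gphi_integrable.comp_sub_right s).const_mul _).integrableOn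
  have key : ∀ z, gphi z - Real.exp k * gphi (z - s) = gphi z * (1 - Real.exp (s * (z - A))) := by
    intro z
    have : Real.exp k * gphi (z - s) = gphi z * Real.exp (s * (z - A)) := by
      simp only [gphi]
      rw [← mul_div_assoc, ← Real.exp_add, div_mul_eq_mul_div, ← Real.exp_add]
      congr 2
      rw [hA]; field_simp; ring
    rw [this]; ring
  have hint : MeasureTheory.Integrable (fun z => gphi z - Real.exp k * gphi (z - s)) :=
    gphi_integrable.sub ((gphi_integrable.comp_sub_right s).const_mul _)
  have hkA : -(k / s) ≤ A := by rw [hA, neg_div]; linarith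
  rw [e2]
  have h3 : ∫ z in Set.Icc (-(k/s) - 2) (-(k/s) - 1), (gphi z - Real.exp k * gphi (z - s)) ≤
      ∫ z in Set.Iic A, (gphi z - Real.exp k * gphi (z - s)) := by
    apply MeasureTheory.setIntegral_mono_set hint.integrableOn
    · filter_upwards [MeasureTheory.ae_restrict_mem measurableSet_Iic] with z hz
      have hz' : z ≤ A := hz
      simp only [Pi.zero_apply]
      rw [key]
      apply mul_nonneg (gphi_pos z).le
      have : Real.exp (s * (z - A)) ≤ 1 := Real.exp_le_one_iff.2 (by nlinarith)
      linarith
    · apply Filter.Eventually.of_forall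
      intro z hz
      have := hz.2
      change z ≤ A
      linarith
  refine le_trans ?_ h3
  have h4 := MeasureTheory.setIntegral_ge_of_const_le_real (μ := MeasureTheory.volume)
    (s := Set.Icc (-(k/s) - 2) (-(k/s) - 1))
    (f := fun z => gphi z - Real.exp k * gphi (z - s))
    (c := gphi (k / s + 2) * (1 - Real.exp (-s))) measurableSet_Icc (by simp) ?_ hint.integrableOn
  · have : MeasureTheory.volume.real (Set.Icc (-(k/s) - 2) (-(k/s) - 1)) = 1 := by
      rw [Real.volume_real_Icc_of_le (by linarith)]; ring
    rw [this, mul_one] at h4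
    exact h4
  · intro z hz
    rw [key]
    have hks : 0 < k / s := by positivity
    have ha : gphi (k / s + 2) ≤ gphi z := by
      simp only [gphi]
      apply div_le_div_of_nonneg_right (Real.exp_le_exp.2 _) (by positivity)
      have := hz.1
      have := hz.2
      nlinarith
    have hb : Real.exp (s * (z - A)) ≤ Real.exp (-s) := by
      apply Real.exp_le_exp.2
      nlinarith [hz.2]
    have hc : Real.exp (-s) ≤ 1 := Real.exp_le_one_iff.2 (by linarith)
    have := gphi_pos z
    apply mul_le_mul ha (by linarith) (by linarith) this.le

lemma BS_pos (k w T : ℝ) (hk : 0 < k) (hw : 0 < w) (hT : 0 < T) : 0 < BS k w T := by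
  refine lt_of_lt_of_le ?_ (BS_lower k w T hk hw hT)
  apply mul_pos (gphi_pos _)
  have : 0 < Real.sqrt (w * T) := Real.sqrt_pos.2 (mul_pos hw hT)
  have : Real.exp (-Real.sqrt (w * T)) < 1 := by simpa using this
  linarith

lemma BS_low (k : ℝ) (hk : 0 < k) (η : ℝ) (hη : 0 < η) :
    ∃ X : ℝ, 0 < X ∧ ∀ x ≥ X, ∀ w T : ℝ, 0 < w → 0 < T → k ^ 2 / (2 * x) ≤ w * T →
      Real.exp (-((1 + η) * x)) ≤ BS k w T := by
  obtain ⟨c, hc⟩ : ∃ c : ℝ, Real.sqrt (2 * Real.pi) / k ≤ Real.exp c :=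
    ⟨_, (Real.add_one_le_exp (Real.sqrt (2 * Real.pi) / k)).trans' (by linarith)⟩
  set c' := |c| + k + 2 with hc'
  refine ⟨(2 / η) * (c' + 9 / η), by positivity, ?_⟩
  intro x hx w T hw hT hwT
  have hx0 : 0 < x := lt_of_lt_of_le (by positivity) hx
  refine le_trans ?_ (BS_lower k w T hk hw hT)
  set v := Real.sqrt (2 * x) with hv
  have hvpos : 0 < v := Real.sqrt_pos.2 (by linarith)
  have hv2 : v ^ 2 = 2 * x := Real.sq_sqrt (by linarith)
  set s := Real.sqrt (w * T) with hs
  have hspos : 0 < s := Real.sqrt_pos.2 (mul_pos hw hT)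
  have hsv : k / v ≤ s := by
    apply Real.le_sqrt_of_sq_le
    rw [div_pow, hv2]; exact hwT
  have hks : k / s ≤ v := by
    rw [div_le_iff₀ hspos]
    rw [div_le_iff₀ hvpos] at hsv
    linarith
  have hksp : 0 < k / s := by positivity
  have ha : gphi (v + 2) ≤ gphi (k / s + 2) := by
    simp only [gphi]
    gcongr
  have hb : k / (v + k) ≤ 1 - Real.exp (-s) := by
    have h1 : Real.exp (-s) ≤ Real.exp (-(k / v)) := Real.exp_le_exp.2 (by linarith)
    have h2 : Real.exp (-(k / v)) ≤ 1 / (1 + k / v) := by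
      rw [Real.exp_neg, ← one_div]
      apply one_div_le_one_div_of_le (by positivity)
      linarith [Real.add_one_le_exp (k / v)]
    have h3 : 1 / (1 + k / v) = 1 - k / (v + k) := by field_simp; ring
    linarith
  refine le_trans ?_ (mul_le_mul ha hb (by positivity) (gphi_pos _).le)
  have hd : Real.sqrt (2 * Real.pi) / k * (v + k) ≤ Real.exp (c + (v + k)) := by
    rw [Real.exp_add]
    apply mul_le_mul hc _ (by positivity) (Real.exp_pos _).le
    linarith [Real.add_one_le_exp (v + k)]
  have he : gphi (v + 2) * (k / (v + k)) =
      Real.exp (-((v + 2) ^ 2) / 2) / (Real.sqrt (2 * Real.pi) / k * (v + k)) := by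
    simp only [gphi]; field_simp
  rw [he]
  have hpi : 0 < Real.sqrt (2 * Real.pi) := by positivity
  rw [le_div_iff₀ (by positivity)]
  refine (mul_le_mul_of_nonneg_left hd (Real.exp_pos _).le).trans ?_
  rw [← Real.exp_add]
  apply Real.exp_le_exp.2
  have hx' : c' + 9 / η ≤ η * x / 2 := by
    have : (η / 2) * ((2 / η) * (c' + 9 / η)) ≤ (η / 2) * x := by gcongr
    have e : (η / 2) * ((2 / η) * (c' + 9 / η)) = c' + 9 / η := by field_simp
    linarith
  have h3v : 3 * v ≤ (η / 4) * v ^ 2 + 9 / η := by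
    have : (η / 4) * v ^ 2 + 9 / η - 3 * v = (η * v - 6) ^ 2 / (4 * η) := by field_simp; ring
    have : 0 ≤ (η * v - 6) ^ 2 / (4 * η) := by positivity
    linarith
  have := le_abs_self c
  nlinarith

lemma Gamma_ge (ν : ℝ) (hν : 0 < ν) (m : ℕ) :
    (m.factorial : ℝ) * Real.Gamma (ν + 1) ≤ Real.Gamma ((m : ℝ) + ν + 1) := by
  induction m with
  | zero => simp
  | succ n ih =>
    have hn : (0 : ℝ) ≤ n := Nat.cast_nonneg n
    have e : (((n + 1 : ℕ) : ℝ) + ν + 1) = ((n : ℝ) + ν + 1) + 1 := by push_cast; ring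
    rw [e, Real.Gamma_add_one (s := (n : ℝ) + ν + 1) (by positivity), Nat.factorial_succ]
    push_cast
    have hg : 0 < Real.Gamma (ν + 1) := Real.Gamma_pos_of_pos (by positivity)
    calc ((n : ℝ) + 1) * n.factorial * Real.Gamma (ν + 1)
        = ((n : ℝ) + 1) * (n.factorial * Real.Gamma (ν + 1)) := by ring
      _ ≤ ((n : ℝ) + ν + 1) * Real.Gamma ((n : ℝ) + ν + 1) := by
        apply mul_le_mul (by linarith) ih (by positivity) (by positivity)

lemma fact_sq_ge (m : ℕ) : (((2 * m).factorial : ℕ) : ℝ) ≤ 4 ^ m * ((m.factorial : ℝ) * m.factorial) := by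
  have h := Nat.centralBinom_le_four_pow m
  rw [Nat.centralBinom_eq_two_mul_choose] at h
  have h2 := Nat.choose_mul_factorial_mul_factorial (show m ≤ 2 * m by omega)
  have e : 2 * m - m = m := by omega
  rw [e] at h2
  have : (2 * m).factorial ≤ 4 ^ m * (m.factorial * m.factorial) := by
    rw [← h2, mul_assoc]
    exact Nat.mul_le_mul_right _ h
  exact_mod_cast this

lemma bessel_term (ν x : ℝ) (hν : 0 < ν) (hx : 0 < x) (m : ℕ) :
    0 ≤ (x / 2) ^ (2 * (m : ℝ) + ν) / ((m.factorial : ℝ) * Real.Gamma ((m : ℝ) + ν + 1)) ∧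
    (x / 2) ^ (2 * (m : ℝ) + ν) / ((m.factorial : ℝ) * Real.Gamma ((m : ℝ) + ν + 1)) ≤
      (x / 2) ^ ν / Real.Gamma (ν + 1) * (x ^ (2 * m) / ((2 * m).factorial : ℝ)) := by
  have hm : (0 : ℝ) ≤ m := Nat.cast_nonneg m
  have hg : 0 < Real.Gamma (ν + 1) := Real.Gamma_pos_of_pos (by positivity)
  have hg2 : 0 < Real.Gamma ((m : ℝ) + ν + 1) := Real.Gamma_pos_of_pos (by positivity)
  refine ⟨by positivity, ?_⟩
  have e : (x / 2) ^ (2 * (m : ℝ) + ν) = (x / 2) ^ ν * (x ^ (2 * m) / 4 ^ m) := by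
    rw [Real.rpow_add (by positivity)]
    have : (2 * (m : ℝ)) = ((2 * m : ℕ) : ℝ) := by push_cast; ring
    rw [this, Real.rpow_natCast, div_pow, pow_mul (2 : ℝ)]
    norm_num
    ring
  rw [e]
  have hf : (0 : ℝ) < m.factorial := by positivity
  have h1 : Real.Gamma (ν + 1) * ((2 * m).factorial : ℝ) ≤
      4 ^ m * ((m.factorial : ℝ) * Real.Gamma ((m : ℝ) + ν + 1)) := by
    calc Real.Gamma (ν + 1) * ((2 * m).factorial : ℝ)
        ≤ Real.Gamma (ν + 1) * (4 ^ m * ((m.factorial : ℝ) * m.factorial)) := by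
          gcongr; exact fact_sq_ge m
      _ = 4 ^ m * ((m.factorial : ℝ) * (m.factorial * Real.Gamma (ν + 1))) := by ring
      _ ≤ _ := by gcongr; exact Gamma_ge ν hν m
  have h2 : (x / 2) ^ ν * (x ^ (2 * m) / 4 ^ m) / ((m.factorial : ℝ) * Real.Gamma ((m : ℝ) + ν + 1))
      = ((x / 2) ^ ν * x ^ (2 * m)) / (4 ^ m * ((m.factorial : ℝ) * Real.Gamma ((m : ℝ) + ν + 1))) := by
    field_simp
  have h3 : (x / 2) ^ ν / Real.Gamma (ν + 1) * (x ^ (2 * m) / ((2 * m).factorial : ℝ))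
      = ((x / 2) ^ ν * x ^ (2 * m)) / (Real.Gamma (ν + 1) * ((2 * m).factorial : ℝ)) := by
    field_simp
  rw [h2, h3]
  apply div_le_div_of_nonneg_left (by positivity) (by positivity) h1

lemma bessel_bounds (ν x : ℝ) (hν : 0 < ν) (hx : 0 < x) :
    (x / 2) ^ ν / Real.Gamma (ν + 1) ≤ besselI ν x ∧
    besselI ν x ≤ (x / 2) ^ ν / Real.Gamma (ν + 1) * Real.exp x := by
  have hg : 0 < Real.Gamma (ν + 1) := Real.Gamma_pos_of_pos (by positivity)
  have hs := (Real.hasSum_cosh x).mul_left ((x / 2) ^ ν / Real.Gamma (ν + 1))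
  have hsum : Summable fun m : ℕ => (x / 2) ^ (2 * (m : ℝ) + ν) /
      ((m.factorial : ℝ) * Real.Gamma ((m : ℝ) + ν + 1)) :=
    Summable.of_nonneg_of_le (fun m => (bessel_term ν x hν hx m).1)
      (fun m => (bessel_term ν x hν hx m).2) hs.summable
  constructor
  · have := hsum.le_tsum 0 (fun m _ => (bessel_term ν x hν hx m).1)
    simpa [besselI] using this
  · have h1 : besselI ν x ≤ (x / 2) ^ ν / Real.Gamma (ν + 1) * Real.cosh x := by
      rw [← hs.tsum_eq]
      exact hsum.tsum_le_tsum (fun m => (bessel_term ν x hν hx m).2) hs.summable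
    refine h1.trans ?_
    gcongr
    rw [Real.cosh_eq]
    have : Real.exp (-x) ≤ Real.exp x := Real.exp_le_exp.2 (by linarith)
    linarith

/-- the CEV density -/
noncomputable def zet (t ξ y0 p z : ℝ) : ℝ :=
  Real.sqrt y0 * z ^ ((1 : ℝ) / 2 - 2 * p) / ((1 - p) * ξ ^ 2 * t)
        * Real.exp (-(z ^ (2 * (1 - p)) + y0 ^ (2 * (1 - p))) / (2 * ξ ^ 2 * t * (1 - p) ^ 2))
        * besselI (1 / (2 * (1 - p))) ((y0 * z) ^ (1 - p) / ((1 - p) ^ 2 * ξ ^ 2 * t))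

lemma zet_bounds (t ξ y0 p : ℝ) (ht : 0 < t) (hξ : 0 < ξ) (hy0 : 0 < y0) (hp : p < 1) :
    ∃ K c : ℝ, 0 < K ∧ 0 < c ∧ ∀ y > 0,
      K * y ^ (1 - 2 * p) * Real.exp (-(1 / (2 * ξ ^ 2 * t * (1 - p) ^ 2) * y ^ (2 * (1 - p))))
        ≤ zet t ξ y0 p y ∧
      zet t ξ y0 p y ≤
      K * y ^ (1 - 2 * p) * Real.exp (-(1 / (2 * ξ ^ 2 * t * (1 - p) ^ 2) * y ^ (2 * (1 - p))))
        * Real.exp (c * y ^ (1 - p)) := by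
  have hq : 0 < 1 - p := by linarith
  set q := 1 - p with hqd
  set ν := 1 / (2 * q) with hν
  have hνp : 0 < ν := by positivity
  have hg : 0 < Real.Gamma (ν + 1) := Real.Gamma_pos_of_pos (by positivity)
  set c := y0 ^ q / (q ^ 2 * ξ ^ 2 * t) with hc
  have hcp : 0 < c := by positivity
  set b := 1 / (2 * ξ ^ 2 * t * q ^ 2) with hb
  refine ⟨Real.sqrt y0 / (q * ξ ^ 2 * t) * Real.exp (-(b * y0 ^ (2 * q))) * ((c / 2) ^ ν / Real.Gamma (ν + 1)),
    c, by positivity, hcp, ?_⟩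
  intro y hy
  have ex : (y0 * y) ^ q / (q ^ 2 * ξ ^ 2 * t) = c * y ^ q := by
    rw [Real.mul_rpow hy0.le hy.le, hc]; ring
  have ez : zet t ξ y0 p y = Real.sqrt y0 / (q * ξ ^ 2 * t) * Real.exp (-(b * y0 ^ (2 * q))) *
      y ^ ((1 : ℝ) / 2 - 2 * p) * Real.exp (-(b * y ^ (2 * q))) * besselI ν (c * y ^ q) := by
    unfold zet
    rw [← hqd, ← hν, ex]
    have : -(y ^ (2 * q) + y0 ^ (2 * q)) / (2 * ξ ^ 2 * t * q ^ 2)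
      = -(b * y0 ^ (2 * q)) + -(b * y ^ (2 * q)) := by rw [hb]; ring
    rw [this, Real.exp_add]; ring
  have ey : (c * y ^ q / 2) ^ ν = (c / 2) ^ ν * y ^ ((1 : ℝ) / 2) := by
    have : c * y ^ q / 2 = (c / 2) * y ^ q := by ring
    rw [this, Real.mul_rpow (by positivity) (by positivity), ← Real.rpow_mul hy.le]
    congr 2
    rw [hν]; field_simp
  have ey2 : y ^ (1 - 2 * p) = y ^ ((1 : ℝ) / 2 - 2 * p) * y ^ ((1 : ℝ) / 2) := by
    rw [← Real.rpow_add hy]; congr 1; ring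
  obtain ⟨h1, h2⟩ := bessel_bounds ν (c * y ^ q) hνp (by positivity)
  rw [ey] at h1 h2
  rw [ez, ey2]
  have hP : 0 ≤ Real.sqrt y0 / (q * ξ ^ 2 * t) * Real.exp (-(b * y0 ^ (2 * q))) *
      y ^ ((1 : ℝ) / 2 - 2 * p) * Real.exp (-(b * y ^ (2 * q))) := by positivity
  constructor
  · refine le_trans (le_of_eq ?_) (mul_le_mul_of_nonneg_left h1 hP)
    ring
  · refine le_trans (mul_le_mul_of_nonneg_left h2 hP) (le_of_eq ?_)
    ring

lemma zet_up (t ξ y0 p : ℝ) (ht : 0 < t) (hξ : 0 < ξ) (hy0 : 0 < y0) (hp : p < 1)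
    (ε : ℝ) (hε : 0 < ε) :
    ∃ h : ℝ → ℝ, MeasureTheory.IntegrableOn h (Set.Ioi 0) ∧ ∀ y > 0, zet t ξ y0 p y ≤
      h y * Real.exp (-((1 - ε) * (1 / (2 * ξ ^ 2 * t * (1 - p) ^ 2) * y ^ (2 * (1 - p))))) := by
  obtain ⟨K, c, hK, hc, H⟩ := zet_bounds t ξ y0 p ht hξ hy0 hp
  have hq : 0 < 1 - p := by linarith
  set q := 1 - p with hqd
  set b := 1 / (2 * ξ ^ 2 * t * q ^ 2) with hb
  have hbp : 0 < b := by positivity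
  have hi := integrableOn_rpow_mul_exp_neg_mul_rpow (p := 2 * q) (s := 1 - 2 * p) (b := ε * b / 2)
    (by linarith) (by positivity) (by positivity)
  refine ⟨fun y => (K * Real.exp (c ^ 2 / (2 * ε * b))) *
    (y ^ (1 - 2 * p) * Real.exp (-(ε * b / 2) * y ^ (2 * q))), hi.const_mul _, ?_⟩
  intro y hy
  refine (H y hy).2.trans ?_
  have e : y ^ (2 * q) = (y ^ q) ^ 2 := by
    rw [mul_comm, Real.rpow_mul hy.le]; norm_cast
  set u := y ^ q with hu
  have hexp : Real.exp (-(b * y ^ (2 * q))) * Real.exp (c * u) ≤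
     Real.exp (c ^ 2 / (2 * ε * b)) * Real.exp (-(ε * b / 2) * y ^ (2 * q)) *
      Real.exp (-((1 - ε) * (b * y ^ (2 * q)))) := by
    rw [← Real.exp_add, ← Real.exp_add, ← Real.exp_add, e]
    apply Real.exp_le_exp.2
    have : c ^ 2 / (2 * ε * b) + -(ε * b / 2) * u ^ 2 + -((1 - ε) * (b * u ^ 2))
       - (-(b * u ^ 2) + c * u) = (ε * b * u - c) ^ 2 / (2 * ε * b) := by field_simp; ring
    have : 0 ≤ (ε * b * u - c) ^ 2 / (2 * ε * b) := by positivity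
    linarith
  have hP : 0 ≤ K * y ^ (1 - 2 * p) := by positivity
  refine le_trans (le_of_eq ?_) ((mul_le_mul_of_nonneg_left hexp hP).trans (le_of_eq ?_)) <;> ring

lemma zet_low (t ξ y0 p : ℝ) (ht : 0 < t) (hξ : 0 < ξ) (hy0 : 0 < y0) (hp : p < 1)
    (ε : ℝ) (hε : 0 < ε) :
    ∀ᶠ y in Filter.atTop,
      Real.exp (-((1 + ε) * (1 / (2 * ξ ^ 2 * t * (1 - p) ^ 2) * y ^ (2 * (1 - p))))) ≤ zet t ξ y0 p y := by
  obtain ⟨K, c, hK, hc, H⟩ := zet_bounds t ξ y0 p ht hξ hy0 hp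
  have hq : 0 < 1 - p := by linarith
  set q := 1 - p with hqd
  set b := 1 / (2 * ξ ^ 2 * t * q ^ 2) with hb
  have hbp : 0 < b := by positivity
  have h1 := tendsto_rpow_mul_exp_neg_mul_atTop_nhds_zero (-(1 - 2 * p) / (2 * q)) (ε * b) (by positivity)
  have h2 := h1.comp (tendsto_rpow_atTop (y := 2 * q) (by positivity))
  filter_upwards [h2.eventually (gt_mem_nhds hK), Filter.eventually_gt_atTop 0] with y hy hy0
  refine le_trans ?_ (H y hy0).1
  simp only [Function.comp] at hy
  rw [← Real.rpow_mul hy0.le] at hy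
  have e : 2 * q * (-(1 - 2 * p) / (2 * q)) = -(1 - 2 * p) := by field_simp
  rw [e, Real.rpow_neg hy0.le] at hy
  have hyp : 0 < y ^ (1 - 2 * p) := by positivity
  have h3 : Real.exp (-(ε * b) * y ^ (2 * q)) ≤ K * y ^ (1 - 2 * p) := by
    rw [inv_mul_eq_div, div_lt_iff₀ hyp] at hy
    exact hy.le
  have h4 : -((1 + ε) * (b * y ^ (2 * q))) = -(ε * b) * y ^ (2 * q) + -(b * y ^ (2 * q)) := by ring
  rw [h4, Real.exp_add]
  gcongr

lemma zet_nonneg (t ξ y0 p : ℝ) (ht : 0 < t) (hξ : 0 < ξ) (hy0 : 0 < y0) (hp : p < 1)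
    (y : ℝ) (hy : 0 < y) : 0 ≤ zet t ξ y0 p y := by
  obtain ⟨K, c, hK, hc, H⟩ := zet_bounds t ξ y0 p ht hξ hy0 hp
  refine le_trans ?_ (H y hy).1
  positivity

lemma C_upper (k b r : ℝ) (hk : 0 < k) (ζ : ℝ → ℝ) (hζ : ∀ y > 0, 0 ≤ ζ y)
    (ε : ℝ) (hε : 0 < ε)
    (hup : ∃ h : ℝ → ℝ, MeasureTheory.IntegrableOn h (Set.Ioi 0) ∧ ∀ y > 0, ζ y ≤
      h y * Real.exp (-((1 - ε) * (b * y ^ r)))) (hε1 : ε < 1) :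
    ∃ M : ℝ, 0 < M ∧ ∀ τ > 0, ∀ Λ : ℝ, (∀ y > 0, Λ ≤ k ^ 2 / (2 * (y * τ)) + b * y ^ r) →
      ∫ y in Set.Ioi (0 : ℝ), BS k y τ * ζ y ≤ M * Real.exp (-((1 - ε) * Λ)) := by
  obtain ⟨h, hi, hh⟩ := hup
  have hnn : ∀ y > 0, 0 ≤ h y := by
    intro y hy
    have := (hζ y hy).trans (hh y hy)
    exact nonneg_of_mul_nonneg_left this (Real.exp_pos _)
  refine ⟨Real.exp (k / 2) * (∫ y in Set.Ioi (0 : ℝ), h y) + 1, ?_, ?_⟩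
  · have : 0 ≤ ∫ y in Set.Ioi (0 : ℝ), h y :=
      MeasureTheory.setIntegral_nonneg measurableSet_Ioi (fun y hy => hnn y hy)
    positivity
  intro τ hτ Λ hΛ
  have h1 : ∫ y in Set.Ioi (0 : ℝ), BS k y τ * ζ y ≤
      ∫ y in Set.Ioi (0 : ℝ), (Real.exp (k / 2) * Real.exp (-((1 - ε) * Λ))) * h y := by
    apply MeasureTheory.integral_mono_of_nonneg
    · filter_upwards [MeasureTheory.ae_restrict_mem measurableSet_Ioi] with y hy
      exact mul_nonneg (BS_pos k y τ hk hy hτ).le (hζ y hy)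
    · exact hi.const_mul _
    · filter_upwards [MeasureTheory.ae_restrict_mem measurableSet_Ioi] with y hy
      have hy' : 0 < y := hy
      have h2 := BS_upper k y τ hk hy hτ
      have h3 := hh y hy
      refine (mul_le_mul h2 h3 (hζ y hy) (by positivity)).trans ?_
      have h4 : Real.exp (-(k ^ 2 / (2 * (y * τ)))) * Real.exp (-((1 - ε) * (b * y ^ r))) ≤
          Real.exp (-((1 - ε) * Λ)) := by
        rw [← Real.exp_add]
        apply Real.exp_le_exp.2
        have h5 := mul_le_mul_of_nonneg_left (hΛ y hy) (show 0 ≤ 1 - ε by linarith)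
        have h6 : 0 ≤ k ^ 2 / (2 * (y * τ)) := by positivity
        nlinarith
      have h7 : 0 ≤ Real.exp (k / 2) * h y := mul_nonneg (Real.exp_pos _).le (hnn y hy)
      refine le_trans (le_of_eq ?_) ((mul_le_mul_of_nonneg_left h4 h7).trans (le_of_eq ?_)) <;> ring
  refine h1.trans ?_
  rw [MeasureTheory.integral_const_mul]
  have := Real.exp_pos (-((1 - ε) * Λ))
  nlinarith

lemma C_lower (k b r : ℝ) (hk : 0 < k) (hb : 0 < b) (hr : 0 < r) (ζ : ℝ → ℝ)
    (hζ : ∀ y > 0, 0 ≤ ζ y) (ε : ℝ) (hε : 0 < ε)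
    (hlow : ∀ᶠ y in Filter.atTop, Real.exp (-((1 + ε / 2) * (b * y ^ r))) ≤ ζ y) :
    ∀ᶠ Y in Filter.atTop, ∀ τ > 0, k ^ 2 / (2 * (Y * τ)) = r * (b * Y ^ r) →
      MeasureTheory.IntegrableOn (fun y => BS k y τ * ζ y) (Set.Ioi 0) →
      Real.exp (-((1 + ε) * ((1 + r) * (b * Y ^ r)))) ≤
        ∫ y in Set.Ioi (0 : ℝ), BS k y τ * ζ y := by
  obtain ⟨X, hX, HX⟩ := BS_low k hk ε hε
  obtain ⟨Y1, hY1⟩ := Filter.eventually_atTop.1 hlow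
  have hx : ∀ᶠ Y : ℝ in Filter.atTop, X ≤ r * (b * Y ^ r) :=
    (((tendsto_rpow_atTop hr).const_mul_atTop hb).const_mul_atTop hr).eventually_ge_atTop X
  have hr2 : ∀ᶠ Y : ℝ in Filter.atTop, (1 + ε / 2) * (1 + Y⁻¹) ^ r < 1 + ε := by
    have h1 : Filter.Tendsto (fun Y : ℝ => (1 + ε / 2) * (1 + Y⁻¹) ^ r) Filter.atTop
        (nhds ((1 + ε / 2) * (1 + 0) ^ r)) :=
      ((tendsto_inv_atTop_zero.const_add 1).rpow_const (Or.inl (by norm_num))).const_mul _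
    apply h1.eventually (gt_mem_nhds _)
    simp; linarith
  filter_upwards [hx, hr2, Filter.eventually_ge_atTop Y1, Filter.eventually_gt_atTop 0]
    with Y hxY hrY hYY hY0 τ hτ hτY hint
  have hsub : Set.Icc Y (Y + 1) ⊆ Set.Ioi 0 := fun z hz => lt_of_lt_of_le hY0 hz.1
  have h1 : ∫ y in Set.Icc Y (Y + 1), BS k y τ * ζ y ≤ ∫ y in Set.Ioi (0 : ℝ), BS k y τ * ζ y := by
    apply MeasureTheory.setIntegral_mono_set hint
    · filter_upwards [MeasureTheory.ae_restrict_mem measurableSet_Ioi] with y hy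
      exact mul_nonneg (BS_pos k y τ hk hy hτ).le (hζ y hy)
    · exact Filter.Eventually.of_forall hsub
  refine le_trans ?_ h1
  have h4 := MeasureTheory.setIntegral_ge_of_const_le_real (μ := MeasureTheory.volume)
    (s := Set.Icc Y (Y + 1)) (f := fun y => BS k y τ * ζ y)
    (c := Real.exp (-((1 + ε) * ((1 + r) * (b * Y ^ r))))) measurableSet_Icc (by simp) ?_
    (hint.mono_set hsub)
  · have : MeasureTheory.volume.real (Set.Icc Y (Y + 1)) = 1 := by
      rw [Real.volume_real_Icc_of_le (by linarith)]; ring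
    rw [this, mul_one] at h4
    exact h4
  · intro y hy
    have hy0 : 0 < y := hsub hy
    have hBS : Real.exp (-((1 + ε) * (r * (b * Y ^ r)))) ≤ BS k y τ := by
      apply HX _ hxY y τ hy0 hτ
      rw [← hτY]
      have : k ^ 2 / (2 * (k ^ 2 / (2 * (Y * τ)))) = Y * τ := by field_simp
      rw [this]
      exact mul_le_mul_of_nonneg_right hy.1 hτ.le
    have hz : Real.exp (-((1 + ε) * (b * Y ^ r))) ≤ ζ y := by
      refine le_trans ?_ (hY1 y (hYY.trans hy.1))
      apply Real.exp_le_exp.2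
      have e1 : (Y + 1) ^ r = (1 + Y⁻¹) ^ r * Y ^ r := by
        rw [← Real.mul_rpow (by positivity) hY0.le]
        congr 1; field_simp
      have e2 : y ^ r ≤ (Y + 1) ^ r := Real.rpow_le_rpow hy0.le hy.2 hr.le
      have hYr : 0 < Y ^ r := by positivity
      have e3 : (1 + ε / 2) * y ^ r ≤ (1 + ε) * Y ^ r := by
        calc (1 + ε / 2) * y ^ r ≤ (1 + ε / 2) * (Y + 1) ^ r := by gcongr
          _ = ((1 + ε / 2) * (1 + Y⁻¹) ^ r) * Y ^ r := by rw [e1]; ring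
          _ ≤ _ := by gcongr
      have e4 := mul_le_mul_of_nonneg_left e3 hb.le
      nlinarith
    refine le_trans (le_of_eq ?_) (mul_le_mul hBS hz (Real.exp_pos _).le (BS_pos k y τ hk hy0 hτ).le)
    rw [← Real.exp_add]; congr 1; ring

lemma min_bound (b r Y y : ℝ) (hb : 0 < b) (hr : 0 < r) (hY : 0 < Y) (hy : 0 < y) :
    (1 + r) * (b * Y ^ r) ≤ (r * (b * Y ^ r)) * (Y / y) + b * y ^ r := by
  have hu : 0 < y / Y := by positivity
  have e : y ^ r = Y ^ r * (y / Y) ^ r := by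
    rw [← Real.mul_rpow hY.le hu.le]; congr 1; field_simp
  have h1 : 1 + r * (1 - Y / y) ≤ (y / Y) ^ r := by
    rw [Real.rpow_def_of_pos hu]
    have h2 := Real.one_sub_inv_le_log_of_pos hu
    rw [inv_div] at h2
    have h3 := Real.add_one_le_exp (Real.log (y / Y) * r)
    nlinarith
  rw [e]
  have hP : 0 ≤ b * Y ^ r := by positivity
  have := mul_le_mul_of_nonneg_left h1 hP
  nlinarith

lemma main_abs (k b r : ℝ) (hk : 0 < k) (hb : 0 < b) (hr : 0 < r) (ζ : ℝ → ℝ)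
    (hζ : ∀ y > 0, 0 ≤ ζ y)
    (hup : ∀ ε > 0, ∃ h : ℝ → ℝ, MeasureTheory.IntegrableOn h (Set.Ioi 0) ∧ ∀ y > 0, ζ y ≤
      h y * Real.exp (-((1 - ε) * (b * y ^ r))))
    (hlow : ∀ ε > 0, ∀ᶠ y in Filter.atTop, Real.exp (-((1 + ε) * (b * y ^ r))) ≤ ζ y)
    (τ₀ : ℝ) (hτ₀ : 0 < τ₀) (σ : ℝ → ℝ)
    (hσ : ∀ τ ∈ Set.Ioo (0 : ℝ) τ₀, 0 < σ τ ∧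
      BS k (σ τ ^ 2) τ = ∫ y in Set.Ioi (0 : ℝ), BS k y τ * ζ y)
    (Yf : ℝ → ℝ) (hYt : Filter.Tendsto Yf (nhdsWithin 0 (Set.Ioi 0)) Filter.atTop)
    (hY : ∀ τ > 0, 0 < Yf τ ∧ k ^ 2 / (2 * (Yf τ * τ)) = r * (b * Yf τ ^ r)) :
    Filter.Tendsto (fun τ => σ τ ^ 2 / (r / (1 + r) * Yf τ)) (nhdsWithin 0 (Set.Ioi 0)) (nhds 1) := by
  have hΛt : Filter.Tendsto (fun τ => (1 + r) * (b * Yf τ ^ r)) (nhdsWithin 0 (Set.Ioi 0))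
      Filter.atTop :=
    ((((tendsto_rpow_atTop hr).const_mul_atTop hb).const_mul_atTop
      (show 0 < 1 + r by positivity))).comp hYt
  have hIoo : ∀ᶠ τ in nhdsWithin (0 : ℝ) (Set.Ioi 0), τ ∈ Set.Ioo (0 : ℝ) τ₀ :=
    Ioo_mem_nhdsGT hτ₀
  -- key relation
  have hrel : ∀ τ > 0, k ^ 2 / (2 * (r / (1 + r) * Yf τ * τ)) = (1 + r) * (b * Yf τ ^ r) := by
    intro τ hτ
    obtain ⟨h1, h2⟩ := hY τ hτ
    have : k ^ 2 / (2 * (r / (1 + r) * Yf τ * τ)) = (1 + r) / r * (k ^ 2 / (2 * (Yf τ * τ))) := by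
      field_simp
    rw [this, h2]; field_simp
  rw [tendsto_order]
  constructor
  · intro B' hB'
    obtain ⟨B, hBB, hB0, hB1⟩ : ∃ B, B' ≤ B ∧ 0 < B ∧ B < 1 :=
      ⟨max B' (1 / 2), le_max_left _ _, by positivity, max_lt hB' (by norm_num)⟩
    obtain ⟨ε, hε, hεB⟩ : ∃ ε > 0, 1 + ε < 1 / B := by
      refine ⟨(1 / B - 1) / 2, ?_, ?_⟩ <;>
      · have : 1 < 1 / B := by rw [lt_div_iff₀ hB0]; linarith
        linarith
    have hC := hYt.eventually (C_lower k b r hk hb hr ζ hζ ε hε (hlow _ (by positivity)))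
    have hbig := hΛt.eventually_gt_atTop (k / 2 / (1 / B - (1 + ε)))
    filter_upwards [hC, hbig, hIoo] with τ h1 h2 h3
    refine lt_of_le_of_lt hBB ?_
    obtain ⟨hs0, hs⟩ := hσ τ h3
    have hτ : 0 < τ := h3.1
    obtain ⟨hY0, hYe⟩ := hY τ hτ
    have hs2 : 0 < σ τ ^ 2 := by positivity
    have hint : MeasureTheory.IntegrableOn (fun y => BS k y τ * ζ y) (Set.Ioi 0) := by
      by_contra hn
      have := BS_pos k _ τ hk hs2 hτ
      rw [hs, MeasureTheory.integral_undef hn] at this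
      exact lt_irrefl _ this
    have h4 := h1 τ hτ hYe hint
    rw [← hs] at h4
    have h5 := h4.trans (BS_upper k _ τ hk hs2 hτ)
    rw [← Real.exp_add, Real.exp_le_exp] at h5
    by_contra hcon
    push Not at hcon
    rw [div_le_iff₀ (by positivity)] at hcon
    have h6 : (1 + r) * (b * Yf τ ^ r) * (1 / B) ≤ k ^ 2 / (2 * (σ τ ^ 2 * τ)) := by
      rw [← hrel τ hτ]
      have e : k ^ 2 / (2 * (r / (1 + r) * Yf τ * τ)) * (1 / B) =
        k ^ 2 / (2 * ((B * (r / (1 + r) * Yf τ)) * τ)) := by field_simp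
      rw [e]
      gcongr
    rw [div_lt_iff₀ (by linarith)] at h2
    nlinarith
  · intro A hA
    obtain ⟨ε, hε, hε1, hεA⟩ : ∃ ε > 0, ε < 1 ∧ (1 + (A - 1) / 2) / A < 1 - ε := by
      have : (1 + (A - 1) / 2) / A < 1 := by rw [div_lt_one (by linarith)]; linarith
      have h0 : 0 < (1 + (A - 1) / 2) / A := by apply div_pos <;> linarith
      exact ⟨(1 - (1 + (A - 1) / 2) / A) / 2, by linarith, by linarith, by linarith⟩
    obtain ⟨M, hM, HM⟩ := C_upper k b r hk ζ hζ ε hε (hup ε hε) hε1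
    obtain ⟨X, hX, HX⟩ := BS_low k hk ((A - 1) / 2) (by linarith)
    have hbig := hΛt.eventually_ge_atTop (A * X)
    have hbig2 := hΛt.eventually_gt_atTop (Real.log M / (1 - ε - (1 + (A - 1) / 2) / A))
    filter_upwards [hbig, hbig2, hIoo] with τ h1 h2 h3
    obtain ⟨hs0, hs⟩ := hσ τ h3
    have hτ : 0 < τ := h3.1
    obtain ⟨hY0, hYe⟩ := hY τ hτ
    have hA0 : 0 < A := by linarith
    have hs2 : 0 < σ τ ^ 2 := by positivity
    by_contra hcon
    push Not at hcon
    rw [le_div_iff₀ (by positivity)] at hcon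
    have h4 := HM τ hτ ((1 + r) * (b * Yf τ ^ r)) (by
      intro y hy
      refine (min_bound b r (Yf τ) y hb hr hY0 hy).trans (le_of_eq ?_)
      rw [← hYe]
      congr 1
      field_simp)
    rw [← hs] at h4
    have h5 := HX ((1 + r) * (b * Yf τ ^ r) / A) (by rw [ge_iff_le, le_div_iff₀ hA0]; linarith)
      (σ τ ^ 2) τ hs2 hτ (by
        rw [← hrel τ hτ]
        have e : k ^ 2 / (2 * (k ^ 2 / (2 * (r / (1 + r) * Yf τ * τ)) / A)) =
          (A * (r / (1 + r) * Yf τ)) * τ := by field_simp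
        rw [e]
        gcongr)
    have h6 := h5.trans h4
    rw [← Real.exp_log hM, ← Real.exp_add, Real.exp_le_exp] at h6
    rw [div_lt_iff₀ (by linarith)] at h2
    have e : (1 + (A - 1) / 2) * ((1 + r) * (b * Yf τ ^ r) / A) =
      (1 + r) * (b * Yf τ ^ r) * ((1 + (A - 1) / 2) / A) := by ring
    rw [e] at h6
    nlinarith

theorem stmt_13 (t ξ y0 p : ℝ) (ht : 0 < t) (hξ : 0 < ξ) (hy0 : 0 < y0) (hp : p < 1)
    (k : ℝ) (hk : 0 < k) :
    let βp : ℝ := 1 / (3 - 2 * p)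
    -- the absorbed CEV density (case `p < 1`)
    let ζ : ℝ → ℝ := fun z =>
      Real.sqrt y0 * z ^ ((1 : ℝ) / 2 - 2 * p) / ((1 - p) * ξ ^ 2 * t)
        * Real.exp (-(z ^ (2 * (1 - p)) + y0 ^ (2 * (1 - p))) / (2 * ξ ^ 2 * t * (1 - p) ^ 2))
        * besselI (1 / (2 * (1 - p))) ((y0 * z) ^ (1 - p) / ((1 - p) ^ 2 * ξ ^ 2 * t))
    -- the call price
    let C : ℝ → ℝ := fun τ => ∫ y in Set.Ioi (0 : ℝ), BS k y τ * ζ y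
    ∀ τ₀ > (0 : ℝ), ∀ σ : ℝ → ℝ,
      (∀ τ ∈ Set.Ioo (0 : ℝ) τ₀, 0 < σ τ ∧ BS k (σ τ ^ 2) τ = C τ) →
      Filter.Tendsto
        (fun τ => σ τ ^ 2 / ((1 - βp) * (k ^ 2 * ξ ^ 2 * t * (1 - p) / (2 * τ)) ^ βp))
        (nhdsWithin 0 (Set.Ioi 0)) (nhds 1) := by
  intro βp ζ C τ₀ hτ₀ σ hσ
  have hq : 0 < 1 - p := by linarith
  set b := 1 / (2 * ξ ^ 2 * t * (1 - p) ^ 2) with hb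
  have hbp : 0 < b := by positivity
  have h1r : 0 < 1 + 2 * (1 - p) := by linarith
  have hβ : βp = 1 / (1 + 2 * (1 - p)) := by
    change 1 / (3 - 2 * p) = _
    congr 1; ring
  have hβ0 : 0 < βp := by rw [hβ]; positivity
  have hmain := main_abs k b (2 * (1 - p)) hk hbp (by positivity) (zet t ξ y0 p)
    (zet_nonneg t ξ y0 p ht hξ hy0 hp) (zet_up t ξ y0 p ht hξ hy0 hp)
    (zet_low t ξ y0 p ht hξ hy0 hp) τ₀ hτ₀ σ hσ
    (fun τ => (k ^ 2 * ξ ^ 2 * t * (1 - p) / (2 * τ)) ^ βp) ?_ ?_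
  · have e : 1 - βp = 2 * (1 - p) / (1 + 2 * (1 - p)) := by rw [hβ]; field_simp; ring
    rw [e]
    exact hmain
  · apply (tendsto_rpow_atTop hβ0).comp
    have h1 : Filter.Tendsto (fun τ : ℝ => (k ^ 2 * ξ ^ 2 * t * (1 - p) / 2) * τ⁻¹)
        (nhdsWithin 0 (Set.Ioi 0)) Filter.atTop :=
      tendsto_inv_nhdsGT_zero.const_mul_atTop (by positivity)
    refine h1.congr fun τ => ?_
    rw [← div_eq_mul_inv, div_div]
  · intro τ hτ
    have hτ' : 0 < τ := hτ
    have hD : 0 < k ^ 2 * ξ ^ 2 * t * (1 - p) / (2 * τ) := by positivity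
    set D := k ^ 2 * ξ ^ 2 * t * (1 - p) / (2 * τ) with hDd
    have hYp : 0 < D ^ βp := by positivity
    refine ⟨hYp, ?_⟩
    have e1 : D ^ βp * (D ^ βp) ^ (2 * (1 - p)) = D := by
      rw [← Real.rpow_mul hD.le, ← Real.rpow_add hD]
      have : βp + βp * (2 * (1 - p)) = 1 := by rw [hβ]; field_simp
      rw [this, Real.rpow_one]
    set Y := D ^ βp with hYd
    have e2 : Y ^ (2 * (1 - p)) = D / Y := by
      rw [eq_div_iff hYp.ne', mul_comm]; exact e1
    change k ^ 2 / (2 * (Y * τ)) = 2 * (1 - p) * (b * Y ^ (2 * (1 - p)))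
    rw [e2, hDd, hb]
    field_simp
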